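/- arXiv:1507.01626 — 4 statements merged into one kernel-verified Lean document; each statement's English description precedes it below -/
import Mathlib

section
/- Let 𝔊 = A ⊕ L carry the bracket [(a₁,ξ₁),(a₂,ξ₂)] = (0, [ξ₁,ξ₂] + D_{a₁}ξ₂ − D_{a₂}ξ₁). Then this bracket satisfies the Jacobi identity (so 𝔊 is a Lie algebra), and the bilinear map γ : 𝔊 × 𝔊 → V defined by γ((a₁,ξ₁),(a₂,ξ₂)) = B(ξ₁, Dξ₂) is a V-valued 2-cocycle on 𝔊: it is alternating (γ(u,u) = 0 for all u ∈ 𝔊) and satisfies γ([u,v],w) + γ([v,w],u) + γ([w,u],v) = 0 for all u,v,w ∈ 𝔊, and hence defines a central extension 0 → V → 𝔊̃ → 𝔊 → 0. -/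
/-- The bracket on 𝔊 = A ⊕ L: [(a₁,ξ₁),(a₂,ξ₂)] = (0, [ξ₁,ξ₂] + D_{a₁}ξ₂ − D_{a₂}ξ₁). -/
def bwBracket {A L : Type*} [AddCommGroup A] [Module ℝ A] [LieRing L] [LieAlgebra ℝ L]
    (Df : A →ₗ[ℝ] L →ₗ[ℝ] L) (u v : A × L) : A × L :=
  (0, ⁅u.2, v.2⁆ + Df u.1 v.2 - Df v.1 u.2)

/-- The V-valued 2-cochain γ((a₁,ξ₁),(a₂,ξ₂)) = B(ξ₁, Dξ₂). -/
def bwGamma {A V L : Type*} [AddCommGroup V] [Module ℝ V] [LieRing L] [LieAlgebra ℝ L]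
    (B : L →ₗ[ℝ] L →ₗ[ℝ] V) (D : L →ₗ[ℝ] L) (u v : A × L) : V :=
  B u.2 (D v.2)

/-!
Put a trivial bracket on `A`: then `𝔊` is the semidirect sum `L ⋊ A`, so the Jacobi identity
holds, and `γ` is `(x, y) ↦ B x (D y)` read off on the components in `L`. In the cyclic sum of
`γ ⁅u, v⁆ w`, two kinds of terms occur. Those of the form `B ⁅x, y⁆ (D z)` add up to
`B (D ⁅x, y⁆) z + B ⁅x, y⁆ (D z) = 0`, because `B ⁅x, y⁆ z` is invariant under cyclic permutations.
Those of the form `B (E y) (D z)`, with `E` a skew derivation commuting with `D`, are symmetric in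
`y` and `z`, and cancel in pairs.
-/

section SkewAdjoint

variable {R M V : Type*} [CommRing R] [AddCommGroup M] [Module R M] [AddCommGroup V] [Module R V]
  {B : M →ₗ[R] M →ₗ[R] V}

theorem isSkewAdjoint_of_add_eq_zero {f : M →ₗ[R] M}
    (h : ∀ x y, B (f x) y + B x (f y) = 0) : B.IsSkewAdjoint f := fun x y ↦ by
  simpa only [Pi.neg_apply, map_neg] using eq_neg_of_add_eq_zero_left (h x y)

theorem apply_left_eq_neg_of_isSkewAdjoint {f : M → M} (hf : B.IsSkewAdjoint f) (x y : M) :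
    B (f x) y = -B x (f y) := by
  simpa only [Pi.neg_apply, map_neg] using hf x y

theorem isAlt_compl₂_of_isSkewAdjoint (h2 : IsSMulRegular V (2 : R))
    (hB : ∀ x y, B x y = B y x) {D : M →ₗ[R] M} (hD : B.IsSkewAdjoint D) :
    (B.compl₂ D).IsAlt := fun x ↦ by
  have hneg : B x (D x) = -B x (D x) := by
    rw [← apply_left_eq_neg_of_isSkewAdjoint hD, hB]
  apply h2.right_eq_zero_of_smul
  rw [LinearMap.compl₂_apply, two_smul, ← eq_neg_iff_add_eq_zero]
  exact hneg

theorem apply_comm_of_isSkewAdjoint_of_commute (hB : ∀ x y, B x y = B y x) {D E : M → M}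
    (hD : B.IsSkewAdjoint D) (hE : B.IsSkewAdjoint E) (hED : Function.Commute E D) (x y : M) :
    B (E x) (D y) = B (E y) (D x) :=
  calc B (E x) (D y) = -B x (E (D y)) := apply_left_eq_neg_of_isSkewAdjoint hE x (D y)
    _ = -B x (D (E y)) := by rw [hED.eq]
    _ = B (D x) (E y) := (apply_left_eq_neg_of_isSkewAdjoint hD x (E y)).symm
    _ = B (E y) (D x) := hB _ _

end SkewAdjoint

section InvariantForm

variable {R L V : Type*} [CommRing R] [LieRing L] [LieAlgebra R L] [AddCommGroup V] [Module R V]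
  {B : L →ₗ[R] L →ₗ[R] V}

theorem apply_lie_rotate (hB : ∀ x y, B x y = B y x)
    (hinv : ∀ z, B.IsSkewAdjoint (LieAlgebra.ad R L z)) (x y z : L) :
    B ⁅x, y⁆ z = B ⁅y, z⁆ x :=
  calc B ⁅x, y⁆ z = -B ⁅y, x⁆ z := by rw [← lie_skew, map_neg, LinearMap.neg_apply]
    _ = B x ⁅y, z⁆ := by
      rw [neg_eq_iff_eq_neg]; exact apply_left_eq_neg_of_isSkewAdjoint (hinv y) x z
    _ = B ⁅y, z⁆ x := hB _ _

theorem cyclic_sum_apply_lie_derivation (hB : ∀ x y, B x y = B y x)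
    (hinv : ∀ z, B.IsSkewAdjoint (LieAlgebra.ad R L z)) {D : LieDerivation R L L}
    (hD : B.IsSkewAdjoint D) (x y z : L) :
    B ⁅x, y⁆ (D z) + B ⁅y, z⁆ (D x) + B ⁅z, x⁆ (D y) = 0 :=
  calc B ⁅x, y⁆ (D z) + B ⁅y, z⁆ (D x) + B ⁅z, x⁆ (D y)
    _ = B ⁅x, y⁆ (D z) + B ⁅D x, y⁆ z + B ⁅x, D y⁆ z := by
      rw [apply_lie_rotate hB hinv (D x) y z, ← apply_lie_rotate hB hinv z x (D y)]
    _ = B ⁅x, y⁆ (D z) + B (D ⁅x, y⁆) z := by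
      rw [D.apply_lie_eq_add, map_add, LinearMap.add_apply]; abel
    _ = 0 := by rw [apply_left_eq_neg_of_isSkewAdjoint hD, add_neg_cancel]

end InvariantForm

section SemiDirectSum

open LieAlgebra

variable {R K L V : Type*} [CommRing R] [LieRing K] [LieAlgebra R K] [LieRing L] [LieAlgebra R L]
  [AddCommGroup V] [Module R V]

theorem cyclic_sum_lie_lie (x y z : L) : ⁅⁅x, y⁆, z⁆ + ⁅⁅y, z⁆, x⁆ + ⁅⁅z, x⁆, y⁆ = 0 := by
  rw [← neg_eq_zero, ← lie_jacobi x y z, ← lie_skew x ⁅y, z⁆, ← lie_skew y ⁅z, x⁆,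
    ← lie_skew z ⁅x, y⁆]
  abel

/-- The 2-cochain `γ (x, a) (y, b) = B x (D y)` on the semidirect sum `L ⋊⁅ψ⁆ K`. -/
def semiDirectCochain (ψ : K →ₗ⁅R⁆ LieDerivation R L L) (B : L →ₗ[R] L →ₗ[R] V)
    (D : L →ₗ[R] L) : (L ⋊⁅ψ⁆ K) →ₗ[R] (L ⋊⁅ψ⁆ K) →ₗ[R] V :=
  (B.compl₂ D).compl₁₂ (SemiDirectSum.projl ψ) (SemiDirectSum.projl ψ)

theorem semiDirectCochain_lie_left (ψ : K →ₗ⁅R⁆ LieDerivation R L L) (B : L →ₗ[R] L →ₗ[R] V)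
    (D : L →ₗ[R] L) (u v w : L ⋊⁅ψ⁆ K) :
    semiDirectCochain ψ B D ⁅u, v⁆ w =
      B ⁅u.left, v.left⁆ (D w.left) + B (ψ u.right v.left) (D w.left) -
        B (ψ v.right u.left) (D w.left) := by
  simp [semiDirectCochain]

theorem cyclic_sum_semiDirectCochain_lie {ψ : K →ₗ⁅R⁆ LieDerivation R L L} {B : L →ₗ[R] L →ₗ[R] V}
    (hB : ∀ x y, B x y = B y x) (hinv : ∀ z, B.IsSkewAdjoint (LieAlgebra.ad R L z))
    {D : LieDerivation R L L} (hD : B.IsSkewAdjoint D) (hψ : ∀ a, B.IsSkewAdjoint (ψ a))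
    (hψD : ∀ a, Function.Commute (ψ a) D) (u v w : L ⋊⁅ψ⁆ K) :
    semiDirectCochain ψ B D ⁅u, v⁆ w + semiDirectCochain ψ B D ⁅v, w⁆ u +
      semiDirectCochain ψ B D ⁅w, u⁆ v = 0 := by
  have hcomm (a : K) (x y : L) : B (ψ a x) (D y) = B (ψ a y) (D x) :=
    apply_comm_of_isSkewAdjoint_of_commute hB hD (hψ a) (hψD a) x y
  simp only [semiDirectCochain_lie_left, LieDerivation.coeFn_coe]
  rw [hcomm u.right v.left, hcomm v.right w.left, hcomm w.right u.left,
    ← cyclic_sum_apply_lie_derivation hB hinv hD u.left v.left w.left]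
  abel

theorem stmt_0_general (h2 : IsSMulRegular V (2 : R)) (ψ : K →ₗ⁅R⁆ LieDerivation R L L)
    {B : L →ₗ[R] L →ₗ[R] V} (hB : ∀ x y, B x y = B y x)
    (hinv : ∀ z, B.IsSkewAdjoint (LieAlgebra.ad R L z))
    {D : LieDerivation R L L} (hD : B.IsSkewAdjoint D) (hψ : ∀ a, B.IsSkewAdjoint (ψ a))
    (hψD : ∀ a, Function.Commute (ψ a) D) :
    (∀ u v w : L ⋊⁅ψ⁆ K, ⁅⁅u, v⁆, w⁆ + ⁅⁅v, w⁆, u⁆ + ⁅⁅w, u⁆, v⁆ = 0) ∧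
    (semiDirectCochain ψ B D).IsAlt ∧
    (∀ u v w : L ⋊⁅ψ⁆ K,
      semiDirectCochain ψ B D ⁅u, v⁆ w + semiDirectCochain ψ B D ⁅v, w⁆ u +
        semiDirectCochain ψ B D ⁅w, u⁆ v = 0) :=
  ⟨cyclic_sum_lie_lie, fun u ↦ isAlt_compl₂_of_isSkewAdjoint h2 hB hD u.left,
    cyclic_sum_semiDirectCochain_lie hB hinv hD hψ hψD⟩

end SemiDirectSum

section AbelianAction

open LieAlgebra

/-- The abelian Lie ring structure on an additive group. It is not an instance, since the group may
already carry another bracket. -/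
abbrev abelianLieRing (A : Type*) [AddCommGroup A] : LieRing A where
  bracket _ _ := 0
  add_lie _ _ _ := (add_zero 0).symm
  lie_add _ _ _ := (add_zero 0).symm
  lie_self _ := rfl
  leibniz_lie _ _ _ := (add_zero 0).symm

/-- The Lie algebra structure on a module equipped with the bracket of `abelianLieRing`. -/
abbrev abelianLieAlgebra (R A : Type*) [CommRing R] [AddCommGroup A] [Module R A] :
    letI := abelianLieRing A
    LieAlgebra R A :=
  letI := abelianLieRing A
  { ‹Module R A› with lie_smul := fun t _ _ ↦ (smul_zero t).symm }

variable {R A L : Type*} [CommRing R] [LieRing A] [LieAlgebra R A] [IsLieAbelian A]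
  [LieRing L] [LieAlgebra R L]

/-- A derivation given by the Leibniz rule `D ⁅x, y⁆ = ⁅D x, y⁆ + ⁅x, D y⁆`, as an element of
Mathlib's `LieDerivation`, whose axiom is `D ⁅x, y⁆ = ⁅x, D y⁆ - ⁅y, D x⁆`. -/
def lieDerivationOfLeibniz (D : L →ₗ[R] L) (h : ∀ x y, D ⁅x, y⁆ = ⁅D x, y⁆ + ⁅x, D y⁆) :
    LieDerivation R L L where
  toLinearMap := D
  leibniz' x y := by rw [h, ← lie_skew y (D x)]; abel

/-- The action of an abelian Lie algebra by a linear family of commuting derivations. -/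
def abelianAction (Df : A →ₗ[R] L →ₗ[R] L)
    (hder : ∀ a x y, Df a ⁅x, y⁆ = ⁅Df a x, y⁆ + ⁅x, Df a y⁆)
    (hcomm : ∀ a b x, Df a (Df b x) = Df b (Df a x)) : A →ₗ⁅R⁆ LieDerivation R L L where
  toFun a := lieDerivationOfLeibniz (Df a) (hder a)
  map_add' a b := LieDerivation.ext fun x ↦ LinearMap.congr_fun (map_add Df a b) x
  map_smul' t a := LieDerivation.ext fun x ↦ LinearMap.congr_fun (map_smul Df t a) x
  map_lie' {a b} := LieDerivation.ext fun x ↦ by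
    rw [trivial_lie_zero, LieDerivation.commutator_apply]
    exact (LinearMap.congr_fun (map_zero Df) x).trans (sub_eq_zero.mpr (hcomm a b x)).symm

/-- The identification of the underlying module `A × L` of `𝔊` with a semidirect sum, where `L`
comes first. -/
def prodEquivSemiDirectSum (ψ : A →ₗ⁅R⁆ LieDerivation R L L) : (A × L) ≃ₗ[R] L ⋊⁅ψ⁆ A :=
  LinearEquiv.prodComm R A L ≪≫ₗ (SemiDirectSum.toProdl ψ).symm

theorem prodEquivSemiDirectSum_bwBracket [LieAlgebra ℝ A] [LieAlgebra ℝ L]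
    (Df : A →ₗ[ℝ] L →ₗ[ℝ] L) (hder : ∀ a x y, Df a ⁅x, y⁆ = ⁅Df a x, y⁆ + ⁅x, Df a y⁆)
    (hcomm : ∀ a b x, Df a (Df b x) = Df b (Df a x)) (u v : A × L) :
    prodEquivSemiDirectSum (abelianAction Df hder hcomm) (bwBracket Df u v) =
      ⁅prodEquivSemiDirectSum (abelianAction Df hder hcomm) u,
        prodEquivSemiDirectSum (abelianAction Df hder hcomm) v⁆ :=
  SemiDirectSum.ext rfl (trivial_lie_zero A A u.1 v.1).symm

end AbelianAction

/-- The bracket on 𝔊 = A ⊕ L satisfies the Jacobi identity, and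
γ((a₁,ξ₁),(a₂,ξ₂)) = B(ξ₁, Dξ₂) is an alternating V-valued 2-cocycle on 𝔊,
hence defines a central extension 0 → V → 𝔊̃ → 𝔊 → 0. -/
theorem stmt_0 {A V L : Type*} [AddCommGroup A] [Module ℝ A]
    [AddCommGroup V] [Module ℝ V] [LieRing L] [LieAlgebra ℝ L]
    (B : L →ₗ[ℝ] L →ₗ[ℝ] V)
    (hBsymm : ∀ x y : L, B x y = B y x)
    (hBinv : ∀ x y z : L, B ⁅z, x⁆ y + B x ⁅z, y⁆ = 0)
    (D : L →ₗ[ℝ] L)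
    (hDder : ∀ x y : L, D ⁅x, y⁆ = ⁅D x, y⁆ + ⁅x, D y⁆)
    (hDskew : ∀ x y : L, B (D x) y + B x (D y) = 0)
    (Df : A →ₗ[ℝ] L →ₗ[ℝ] L)
    (hDfder : ∀ (a : A) (x y : L), Df a ⁅x, y⁆ = ⁅Df a x, y⁆ + ⁅x, Df a y⁆)
    (hDfskew : ∀ (a : A) (x y : L), B (Df a x) y + B x (Df a y) = 0)
    (hDfcomm : ∀ (a b : A) (x : L), Df a (Df b x) = Df b (Df a x))
    (hDfD : ∀ (a : A) (x : L), Df a (D x) = D (Df a x)) :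
    (∀ u v w : A × L,
      bwBracket Df (bwBracket Df u v) w + bwBracket Df (bwBracket Df v w) u +
        bwBracket Df (bwBracket Df w u) v = 0) ∧
    (∀ u : A × L, bwGamma B D u u = 0) ∧
    (∀ u v w : A × L,
      bwGamma B D (bwBracket Df u v) w + bwGamma B D (bwBracket Df v w) u +
        bwGamma B D (bwBracket Df w u) v = 0) := by
  let := abelianLieRing A
  let := abelianLieAlgebra ℝ A
  have : IsLieAbelian A := ⟨fun _ _ ↦ rfl⟩
  let D' := lieDerivationOfLeibniz D hDder
  let e := prodEquivSemiDirectSum (abelianAction Df hDfder hDfcomm)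
  have he (u v : A × L) : e (bwBracket Df u v) = ⁅e u, e v⁆ :=
    prodEquivSemiDirectSum_bwBracket Df hDfder hDfcomm u v
  have hγ (u v : A × L) : bwGamma B D u v = semiDirectCochain _ B D' (e u) (e v) := rfl
  obtain ⟨hjacobi, halt, hcocycle⟩ := stmt_0_general
    (IsSMulRegular.of_ne_zero two_ne_zero) (abelianAction Df hDfder hDfcomm) hBsymm
    (fun z ↦ isSkewAdjoint_of_add_eq_zero fun x y ↦ hBinv x y z)
    (D := D') (isSkewAdjoint_of_add_eq_zero hDskew)
    (fun a ↦ isSkewAdjoint_of_add_eq_zero (hDfskew a)) hDfD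
  refine ⟨fun u v w ↦ e.injective ?_, fun u ↦ halt (e u), fun u v w ↦ ?_⟩
  · simpa only [map_add, map_zero, he] using hjacobi (e u) (e v) (e w)
  · simpa only [hγ, he] using hcocycle (e u) (e v) (e w)
end

section
/- If there exists x ∈ 𝔤 with B(x,x) ≠ 0, then the loop-algebra cocycle ω is non-trivial: there exist ξ, η ∈ L𝔤 with ⁅ξ(t),η(t)⁆ = 0 for all t ∈ ℝ but ω(ξ,η) ≠ 0 (for instance ξ(t) = cos(2πt)·x and η(t) = sin(2πt)·x, for which ω(ξ,η) = π·B(x,x)); consequently there is no linear functional μ on L𝔤 with ω(ξ₁,ξ₂) = μ(⁅ξ₁,ξ₂⁆) for all ξ₁,ξ₂, i.e. ω is not a 2-coboundary. -/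
/-- The loop-algebra 2-cochain ω(ξ₁,ξ₂) = ∫₀¹ B(ξ₁(t), ξ₂′(t)) dt. -/
noncomputable def loopCocycle {g : Type*} [NormedAddCommGroup g] [NormedSpace ℝ g]
    (B : g →ₗ[ℝ] g →ₗ[ℝ] ℝ) (ξ η : ℝ → g) : ℝ :=
  ∫ t in (0:ℝ)..1, B (ξ t) (deriv η t)

/-!
A coboundary `μ(⁅ξ, η⁆)` vanishes on every pair of commuting loops. Two loops on the line `ℝ x`
always commute, but `ω` restricted to that line is `B(x, x)` times `∮ a db`, which for
`(a, b) = (cos 2πt, sin 2πt)` is the area `π` of the unit disc.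
-/

theorem periodic_one_comp_mul_left {α : Type*} {f : ℝ → α} {c : ℝ}
    (hf : Function.Periodic f c) (hc : c ≠ 0) : Function.Periodic (fun t => f (c * t)) 1 := by
  simpa only [inv_mul_cancel₀ hc] using hf.const_mul c

theorem integral_cos_mul_deriv_sin_two_pi_mul :
    ∫ t in (0 : ℝ)..1,
      Real.cos (2 * Real.pi * t) * deriv (fun s => Real.sin (2 * Real.pi * s)) t = Real.pi := by
  have deriv_sin (t : ℝ) : deriv (fun s => Real.sin (2 * Real.pi * s)) t =
      2 * Real.pi * Real.cos (2 * Real.pi * t) := by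
    rw [deriv_comp_mul_left, Real.deriv_sin, smul_eq_mul]
  calc ∫ t in (0 : ℝ)..1,
        Real.cos (2 * Real.pi * t) * deriv (fun s => Real.sin (2 * Real.pi * s)) t
      = 2 * Real.pi * ∫ t in (0 : ℝ)..1, Real.cos (2 * Real.pi * t) ^ 2 := by
        rw [← intervalIntegral.integral_const_mul]
        simp only [deriv_sin]
        ring_nf
    _ = ∫ θ in (0 : ℝ)..2 * Real.pi, Real.cos θ ^ 2 := by
        rw [intervalIntegral.mul_integral_comp_mul_left (f := fun θ => Real.cos θ ^ 2),
          mul_zero, mul_one]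
    _ = Real.pi := by simp [integral_cos_sq]

section LoopCocycle

variable {g : Type*} [NormedAddCommGroup g] [NormedSpace ℝ g]

/-- A 2-cochain `ω` on the smooth 1-periodic loops in `g` is a coboundary for the bracket `br` if
`ω(ξ, η) = μ(⁅ξ, η⁆)` for a linear functional `μ`. Taking `μ` on all functions `ℝ → g` instead of
on the loops is no restriction, since a functional on a subspace extends linearly. -/
def IsLoopCoboundary (br : g →ₗ[ℝ] g →ₗ[ℝ] g) (ω : (ℝ → g) → (ℝ → g) → ℝ) : Prop :=
  ∃ μ : (ℝ → g) →ₗ[ℝ] ℝ,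
    ∀ ξ η : ℝ → g,
      ContDiff ℝ (⊤ : ℕ∞) ξ → Function.Periodic ξ 1 →
      ContDiff ℝ (⊤ : ℕ∞) η → Function.Periodic η 1 →
      ω ξ η = μ (fun t => br (ξ t) (η t))

theorem IsLoopCoboundary.eq_zero_of_bracket_eq_zero {br : g →ₗ[ℝ] g →ₗ[ℝ] g}
    {ω : (ℝ → g) → (ℝ → g) → ℝ} (hω : IsLoopCoboundary br ω) {ξ η : ℝ → g}
    (hξ : ContDiff ℝ (⊤ : ℕ∞) ξ) (hξ_per : Function.Periodic ξ 1)
    (hη : ContDiff ℝ (⊤ : ℕ∞) η) (hη_per : Function.Periodic η 1)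
    (hcomm : ∀ t, br (ξ t) (η t) = 0) : ω ξ η = 0 := by
  obtain ⟨μ, hμ⟩ := hω
  rw [hμ ξ η hξ hξ_per hη hη_per, funext hcomm]
  exact map_zero μ

theorem loopCocycle_smul_const (B : g →ₗ[ℝ] g →ₗ[ℝ] ℝ) (a : ℝ → ℝ) {b : ℝ → ℝ}
    (hb : Differentiable ℝ b) (x y : g) :
    loopCocycle B (fun t => a t • x) (fun t => b t • y) =
      (∫ t in (0 : ℝ)..1, a t * deriv b t) * B x y := by
  have integrand_eq (t : ℝ) :
      B (a t • x) (deriv (fun s => b s • y) t) = a t * deriv b t * B x y := by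
    rw [deriv_smul_const (hb t)]
    simp only [map_smul, LinearMap.smul_apply, smul_eq_mul]
    ring
  simp only [loopCocycle, integrand_eq, intervalIntegral.integral_mul_const]

theorem loopCocycle_cos_smul_sin_smul (B : g →ₗ[ℝ] g →ₗ[ℝ] ℝ) (x y : g) :
    loopCocycle B (fun t => Real.cos (2 * Real.pi * t) • x)
      (fun t => Real.sin (2 * Real.pi * t) • y) = Real.pi * B x y := by
  rw [loopCocycle_smul_const B _ (by fun_prop), integral_cos_mul_deriv_sin_two_pi_mul]

end LoopCocycle

theorem stmt_2_general {g : Type*} [NormedAddCommGroup g] [NormedSpace ℝ g]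
    (br : g →ₗ[ℝ] g →ₗ[ℝ] g) (B : g →ₗ[ℝ] g →ₗ[ℝ] ℝ)
    (x : g) (hbr : br x x = 0) (hx : B x x ≠ 0) :
    (∃ ξ η : ℝ → g,
      ξ = (fun t : ℝ => Real.cos (2 * Real.pi * t) • x) ∧
      η = (fun t : ℝ => Real.sin (2 * Real.pi * t) • x) ∧
      ContDiff ℝ (⊤ : ℕ∞) ξ ∧ Function.Periodic ξ 1 ∧
      ContDiff ℝ (⊤ : ℕ∞) η ∧ Function.Periodic η 1 ∧
      (∀ t : ℝ, br (ξ t) (η t) = 0) ∧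
      loopCocycle B ξ η = Real.pi * B x x ∧
      loopCocycle B ξ η ≠ 0) ∧
    ¬ IsLoopCoboundary br (loopCocycle B) := by
  let ξ : ℝ → g := fun t => Real.cos (2 * Real.pi * t) • x
  let η : ℝ → g := fun t => Real.sin (2 * Real.pi * t) • x
  have hξ : ContDiff ℝ (⊤ : ℕ∞) ξ := by fun_prop
  have hη : ContDiff ℝ (⊤ : ℕ∞) η := by fun_prop
  have hξ_per : Function.Periodic ξ 1 :=
    (periodic_one_comp_mul_left Real.cos_periodic Real.two_pi_pos.ne').comp (· • x)
  have hη_per : Function.Periodic η 1 :=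
    (periodic_one_comp_mul_left Real.sin_periodic Real.two_pi_pos.ne').comp (· • x)
  have hcomm (t : ℝ) : br (ξ t) (η t) = 0 := by
    simp only [ξ, η, map_smul, LinearMap.smul_apply, hbr, smul_zero]
  have hval : loopCocycle B ξ η = Real.pi * B x x := loopCocycle_cos_smul_sin_smul B x x
  have hne : loopCocycle B ξ η ≠ 0 := hval ▸ mul_ne_zero Real.pi_ne_zero hx
  exact ⟨⟨ξ, η, rfl, rfl, hξ, hξ_per, hη, hη_per, hcomm, hval, hne⟩,
    fun hω => hne (hω.eq_zero_of_bracket_eq_zero hξ hξ_per hη hη_per hcomm)⟩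

/-- If there is x ∈ 𝔤 with B(x,x) ≠ 0, the loop-algebra cocycle ω is non-trivial:
there are smooth 1-periodic loops ξ, η with pointwise-vanishing bracket but
ω(ξ,η) ≠ 0 (for instance ξ(t) = cos(2πt)·x, η(t) = sin(2πt)·x, for which
ω(ξ,η) = π·B(x,x)); consequently there is no linear functional μ with
ω(ξ₁,ξ₂) = μ(⁅ξ₁,ξ₂⁆) on the loop algebra, i.e. ω is not a 2-coboundary. -/
theorem stmt_2 {g : Type*} [NormedAddCommGroup g] [NormedSpace ℝ g]
    [FiniteDimensional ℝ g]
    (br : g →ₗ[ℝ] g →ₗ[ℝ] g)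
    (hbr_alt : ∀ x : g, br x x = 0)
    (hbr_jacobi : ∀ x y z : g, br (br x y) z + br (br y z) x + br (br z x) y = 0)
    (B : g →ₗ[ℝ] g →ₗ[ℝ] ℝ)
    (hBsymm : ∀ x y : g, B x y = B y x)
    (hBinv : ∀ x y z : g, B (br z x) y + B x (br z y) = 0)
    (x : g) (hx : B x x ≠ 0) :
    (∃ ξ η : ℝ → g,
      ξ = (fun t : ℝ => Real.cos (2 * Real.pi * t) • x) ∧
      η = (fun t : ℝ => Real.sin (2 * Real.pi * t) • x) ∧
      ContDiff ℝ (⊤ : ℕ∞) ξ ∧ Function.Periodic ξ 1 ∧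
      ContDiff ℝ (⊤ : ℕ∞) η ∧ Function.Periodic η 1 ∧
      (∀ t : ℝ, br (ξ t) (η t) = 0) ∧
      loopCocycle B ξ η = Real.pi * B x x ∧
      loopCocycle B ξ η ≠ 0) ∧
    ¬ ∃ μ : (ℝ → g) →ₗ[ℝ] ℝ,
      ∀ ξ η : ℝ → g,
        ContDiff ℝ (⊤ : ℕ∞) ξ → Function.Periodic ξ 1 →
        ContDiff ℝ (⊤ : ℕ∞) η → Function.Periodic η 1 →
        loopCocycle B ξ η = μ (fun t => br (ξ t) (η t)) :=
  stmt_2_general br B x (hbr_alt x) hx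
end

section
/- For all X,Y,W,Z ∈ ǧ, the bracket of β-values satisfies the identity [β(X,Y),β(W,Z)] = −β(β([W,X],Y),Z) − β(β(X,[W,Y]),Z) + β(β([Z,X],Y),W) + β(β(X,[Z,Y]),W). -/
/-- The bracket on ǧ = ℝ ⊕ L: [(t₁,X₁),(t₂,X₂)] = (0, [X₁,X₂] + t₁·DX₂ − t₂·DX₁). -/
def cBracket {L : Type*} [LieRing L] [LieAlgebra ℝ L]
    (D : L →ₗ[ℝ] L) (u v : ℝ × L) : ℝ × L :=
  (0, ⁅u.2, v.2⁆ + u.1 • D v.2 - v.1 • D u.2)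

/-- The map β : ǧ × ǧ → ǧ, β((t,X),(s,Y)) = (0, s·X − t·Y). -/
def betaMap {L : Type*} [LieRing L] [LieAlgebra ℝ L] (u v : ℝ × L) : ℝ × L :=
  (0, v.1 • u.2 - u.1 • v.2)

/-!
Write `τ : ǧ → ℝ` for the projection. Then `β(u, v) = τ v • u - τ u • v` holds in all of `ǧ`, and
`τ` vanishes on brackets, so `[W, ·]` acts as a derivation of `β`. Expanding the second argument of
`[β(X, Y), β(W, Z)]` gives, by skew-symmetry, `-τ Z • [W, β(X, Y)] + τ W • [Z, β(X, Y)]`, and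
the derivation rule splits each term in two.
-/

section WedgeContraction

variable {R M : Type*} [CommRing R] [AddCommGroup M] [Module R M]

/-- The right contraction of `u ∧ v` by the linear functional `τ`. It generalizes `betaMap`, which
is the case where `τ` is the projection `ℝ × L → ℝ`. -/
def wedgeContraction (τ : M →ₗ[R] R) (u v : M) : M :=
  τ v • u - τ u • v

theorem map_wedgeContraction {N : Type*} [AddCommGroup N] [Module R N] (τ : M →ₗ[R] R)
    (f : M →ₗ[R] N) (u v : M) : f (wedgeContraction τ u v) = τ v • f u - τ u • f v := by
  simp only [wedgeContraction, map_sub, map_smul]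

theorem apply_wedgeContraction_self (τ : M →ₗ[R] R) (u v : M) :
    τ (wedgeContraction τ u v) = 0 := by
  rw [map_wedgeContraction, smul_eq_mul, smul_eq_mul, mul_comm, sub_self]

theorem wedgeContraction_of_apply_left_eq_zero {τ : M →ₗ[R] R} {u : M} (hu : τ u = 0) (v : M) :
    wedgeContraction τ u v = τ v • u := by
  rw [wedgeContraction, hu, zero_smul, sub_zero]

theorem wedgeContraction_of_apply_right_eq_zero {τ : M →ₗ[R] R} {v : M} (hv : τ v = 0) (u : M) :
    wedgeContraction τ u v = -(τ u • v) := by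
  rw [wedgeContraction, hv, zero_smul, zero_sub]

theorem map_wedgeContraction_eq_add {τ : M →ₗ[R] R} {f : M →ₗ[R] M} (hf : ∀ u, τ (f u) = 0)
    (u v : M) :
    f (wedgeContraction τ u v) = wedgeContraction τ (f u) v + wedgeContraction τ u (f v) := by
  rw [map_wedgeContraction, wedgeContraction_of_apply_left_eq_zero (hf u),
    wedgeContraction_of_apply_right_eq_zero (hf v), sub_eq_add_neg]

theorem stmt_10_general {τ : M →ₗ[R] R} {B : M →ₗ[R] M →ₗ[R] M}
    (hskew : ∀ u v, -B u v = B v u) (hτ : ∀ u v, τ (B u v) = 0) (X Y W Z : M) :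
    B (wedgeContraction τ X Y) (wedgeContraction τ W Z) =
      -wedgeContraction τ (wedgeContraction τ (B W X) Y) Z -
        wedgeContraction τ (wedgeContraction τ X (B W Y)) Z +
        wedgeContraction τ (wedgeContraction τ (B Z X) Y) W +
        wedgeContraction τ (wedgeContraction τ X (B Z Y)) W := by
  have contract_contract (u v w : M) :
      wedgeContraction τ (wedgeContraction τ u v) w = τ w • wedgeContraction τ u v :=
    wedgeContraction_of_apply_left_eq_zero (apply_wedgeContraction_self τ u v) w
  calc
    B (wedgeContraction τ X Y) (wedgeContraction τ W Z)
      = τ Z • B (wedgeContraction τ X Y) W - τ W • B (wedgeContraction τ X Y) Z :=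
        map_wedgeContraction τ _ W Z
    _ = -(τ Z • B W (wedgeContraction τ X Y)) + τ W • B Z (wedgeContraction τ X Y) := by
      rw [← hskew W, ← hskew Z, smul_neg, smul_neg, sub_neg_eq_add]
    _ = -(τ Z • (wedgeContraction τ (B W X) Y + wedgeContraction τ X (B W Y))) +
          τ W • (wedgeContraction τ (B Z X) Y + wedgeContraction τ X (B Z Y)) := by
      rw [map_wedgeContraction_eq_add (hτ W), map_wedgeContraction_eq_add (hτ Z)]
    _ = _ := by
      simp only [contract_contract]
      module

end WedgeContraction

section CBracket

variable {L : Type*} [LieRing L] [LieAlgebra ℝ L]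

theorem betaMap_eq_wedgeContraction (u v : ℝ × L) :
    betaMap u v = wedgeContraction (LinearMap.fst ℝ ℝ L) u v :=
  Prod.ext (apply_wedgeContraction_self (LinearMap.fst ℝ ℝ L) u v).symm rfl

theorem neg_cBracket (D : L →ₗ[ℝ] L) (u v : ℝ × L) : -cBracket D u v = cBracket D v u := by
  ext
  · exact neg_zero
  · simp only [cBracket, Prod.snd_neg, ← lie_skew v.2 u.2]
    abel

theorem cBracket_add_right (D : L →ₗ[ℝ] L) (u v w : ℝ × L) :
    cBracket D u (v + w) = cBracket D u v + cBracket D u w := by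
  ext
  · exact (add_zero 0).symm
  · simp only [cBracket, Prod.snd_add, Prod.fst_add, lie_add, map_add]
    module

theorem cBracket_smul_right (D : L →ₗ[ℝ] L) (c : ℝ) (u v : ℝ × L) :
    cBracket D u (c • v) = c • cBracket D u v := by
  ext
  · exact (mul_zero c).symm
  · simp only [cBracket, Prod.smul_snd, Prod.smul_fst, lie_smul, map_smul, smul_eq_mul]
    module

/-- The bracket `cBracket D` bundled as a bilinear map. -/
def cBracketBilin (D : L →ₗ[ℝ] L) : ℝ × L →ₗ[ℝ] ℝ × L →ₗ[ℝ] ℝ × L :=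
  LinearMap.mk₂ ℝ (cBracket D)
    (fun u v w => by simp only [← neg_cBracket D w, cBracket_add_right, neg_add])
    (fun c u v => by simp only [← neg_cBracket D v, cBracket_smul_right, smul_neg])
    (cBracket_add_right D)
    (cBracket_smul_right D)

end CBracket

/-- For all X,Y,W,Z ∈ ǧ:
[β(X,Y),β(W,Z)] = −β(β([W,X],Y),Z) − β(β(X,[W,Y]),Z) + β(β([Z,X],Y),W) + β(β(X,[Z,Y]),W). -/
theorem stmt_10 {L : Type*} [LieRing L] [LieAlgebra ℝ L] (D : L →ₗ[ℝ] L) :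
    ∀ X Y W Z : ℝ × L,
      cBracket D (betaMap X Y) (betaMap W Z) =
        -betaMap (betaMap (cBracket D W X) Y) Z -
          betaMap (betaMap X (cBracket D W Y)) Z +
          betaMap (betaMap (cBracket D Z X) Y) W +
          betaMap (betaMap X (cBracket D Z Y)) W := by
  simp only [betaMap_eq_wedgeContraction]
  exact stmt_10_general (B := cBracketBilin D) (neg_cBracket D) (fun _ _ => rfl)
end

section
/- Suppose the T-action on M is free (φ + m = m for some m implies φ = 0), the G-action on P is free (x·g = x for some x implies g = 1), and the fibers of p are single G-orbits (p(x) = p(y) implies y = x·g for some g ∈ G). If f and f′ are equivariant loops such that p(f′(0)) lies in the T-orbit of p(f(0)) in M, then there exists a unique (φ,γ) ∈ Ǧ with f′ = f·(φ,γ). Thus Ǧ acts freely and transitively on the set of equivariant loops lying over a given T-orbit — the set-theoretic content of the paper's claim that the equivariant loop space Q_P is a principal Ǧ-bundle over Σ = M/T. -/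
/-- Multiplication of the semidirect product Ǧ = T ⋉_ρ LG:
(φ₁,γ₁)·(φ₂,γ₂) = (φ₁+φ₂, γ₁·ρ_{φ₁}(γ₂)). -/
def gMul {T G : Type*} [AddCommGroup T] [Group G] (a b : T × (T → G)) : T × (T → G) :=
  (a.1 + b.1, fun θ => a.2 θ * b.2 (θ - a.1))

/-- The action of Ǧ on maps f : T → P: (f·(φ,γ))(θ) = f(θ+φ)·γ(θ+φ). -/
def fAct {T G P : Type*} [AddCommGroup T] [Group G] (act : P → G → P)
    (f : T → P) (a : T × (T → G)) : T → P :=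
  fun θ => act (f (θ + a.1)) (a.2 (θ + a.1))

/-- Equivariant loops: f : T → P with p(f(θ+φ)) = φ + p(f(θ)). -/
def IsEquivLoop {T P M : Type*} [AddCommGroup T] [AddAction T M]
    (p : P → M) (f : T → P) : Prop :=
  ∀ θ φ : T, p (f (θ + φ)) = φ +ᵥ p (f θ)

/-! The equation `f' = f·(φ,γ)` says that `f' (θ - φ) = f θ · γ θ` for all `θ`. Applying `p`
turns it into a condition on `φ` alone, which freeness of the `T`-action solves at most once. For
that `φ`, the points `f' (θ - φ)` and `f θ` lie in a common fiber of `p`, on which `G` acts simply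
transitively, so each value `γ θ` is uniquely determined. -/

section FreeAction

variable {G P M : Type*} [Group G] {act : P → G → P} {p : P → M}

theorem act_left_cancel (hact_mul : ∀ (x : P) (g h : G), act (act x g) h = act x (g * h))
    (hGfree : ∀ (x : P) (g : G), act x g = x → g = 1)
    {x : P} {g h : G} (hgh : act x g = act x h) : g = h := by
  have hfix : act (act x g) (g⁻¹ * h) = act x g := by
    rw [hact_mul, mul_inv_cancel_left, hgh]
  exact inv_mul_eq_one.mp (hGfree _ _ hfix)

theorem existsUnique_eq_act (hact_mul : ∀ (x : P) (g h : G), act (act x g) h = act x (g * h))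
    (hGfree : ∀ (x : P) (g : G), act x g = x → g = 1)
    (hOrbit : ∀ x y : P, p x = p y → ∃ g : G, y = act x g)
    {x y : P} (hxy : p x = p y) : ∃! g : G, y = act x g :=
  existsUnique_of_exists_of_unique (hOrbit x y hxy) fun _ _ hg hh =>
    act_left_cancel hact_mul hGfree (hg.symm.trans hh)

end FreeAction

theorem eq_fAct_iff {T G P : Type*} [AddCommGroup T] [Group G] {act : P → G → P}
    {f f' : T → P} {a : T × (T → G)} :
    f' = fAct act f a ↔ ∀ θ, f' (θ - a.1) = act (f θ) (a.2 θ) := by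
  rw [funext_iff, ← (Equiv.subRight a.1).forall_congr_right]
  simp only [fAct, Equiv.subRight_apply, sub_add_cancel]

namespace IsEquivLoop

variable {T P M : Type*} [AddCommGroup T] [AddAction T M] {p : P → M} {f f' : T → P}

theorem apply_eq_vadd_apply_zero (hf : IsEquivLoop p f) (θ : T) : p (f θ) = θ +ᵥ p (f 0) := by
  simpa only [zero_add] using hf 0 θ

theorem apply_sub_eq_apply (hf : IsEquivLoop p f) (hf' : IsEquivLoop p f') {φ : T}
    (h : p (f' 0) = φ +ᵥ p (f 0)) (θ : T) : p (f' (θ - φ)) = p (f θ) := by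
  rw [hf'.apply_eq_vadd_apply_zero, h, vadd_vadd, sub_add_cancel, ← hf.apply_eq_vadd_apply_zero]

theorem apply_fAct_eq_vadd {G : Type*} [Group G] {act : P → G → P}
    (hp : ∀ (x : P) (g : G), p (act x g) = p x) (hf : IsEquivLoop p f) (a : T × (T → G)) (θ : T) :
    p (fAct act f a θ) = a.1 +ᵥ p (f θ) :=
  (hp _ _).trans (hf θ a.1)

end IsEquivLoop

/-- If the T-action on M is free, the G-action on P is free, and the fibers of p
are single G-orbits, then for equivariant loops f, f′ with p(f′(0)) in the T-orbit
of p(f(0)) there is a unique (φ,γ) ∈ Ǧ with f′ = f·(φ,γ): Ǧ acts freely and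
transitively on the equivariant loops over a given T-orbit. -/
theorem stmt_13 {T G P M : Type*} [AddCommGroup T] [Group G] [AddAction T M]
    (act : P → G → P)
    (hact_one : ∀ x : P, act x 1 = x)
    (hact_mul : ∀ (x : P) (g h : G), act (act x g) h = act x (g * h))
    (p : P → M)
    (hp : ∀ (x : P) (g : G), p (act x g) = p x)
    (hTfree : ∀ (φ : T) (m : M), φ +ᵥ m = m → φ = 0)
    (hGfree : ∀ (x : P) (g : G), act x g = x → g = 1)
    (hOrbit : ∀ x y : P, p x = p y → ∃ g : G, y = act x g) :
    ∀ f f' : T → P, IsEquivLoop p f → IsEquivLoop p f' →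
      (∃ ψ : T, p (f' 0) = ψ +ᵥ p (f 0)) →
      ∃! a : T × (T → G), f' = fAct act f a := by
  intro f f' hf hf' ⟨ψ, hψ⟩
  have : IsCancelVAdd T M := isCancelVAdd_iff_eq_zero_of_vadd_eq.mpr hTfree
  have same_fiber : ∀ θ, p (f' (θ - ψ)) = p (f θ) := hf.apply_sub_eq_apply hf' hψ
  have unique_value : ∀ θ, ∃! g, f' (θ - ψ) = act (f θ) g := fun θ =>
    existsUnique_eq_act hact_mul hGfree hOrbit (same_fiber θ).symm
  obtain ⟨γ, hγ⟩ := forall_existsUnique_iff.mp unique_value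
  have eq_fAct_iff_eq : ∀ δ, f' = fAct act f (ψ, δ) ↔ γ = δ := fun δ => by
    rw [eq_fAct_iff, funext_iff]
    exact forall_congr' fun _ => hγ
  refine ⟨(ψ, γ), (eq_fAct_iff_eq γ).mpr rfl, ?_⟩
  rintro ⟨φ, δ⟩ h
  have hφ : p (f' 0) = φ +ᵥ p (f 0) := by rw [h, hf.apply_fAct_eq_vadd hp]
  obtain rfl : φ = ψ := IsCancelVAdd.right_cancel _ _ _ (hφ.symm.trans hψ)
  rw [(eq_fAct_iff_eq δ).mp h]
end
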